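/- Exact single-sample mutual information formula: let X ~ N(0, I_L), Z ~ N(0, I_L) and ℓ uniform on {0,…,L−1} be mutually independent, and let Y = R_ℓ X + σ Z. Then I(X; Y) = (L/2)·log(1 + σ^{−2}) − L·σ^{−2} + E_{X,Z}[ log( (1/L) · Σ_{ℓ'=0}^{L−1} exp( σ^{−2} ⟨X + σZ, R_{ℓ'} X⟩ ) ) ]. -/

import Mathlib

open MeasureTheory ProbabilityTheory Filter
open scoped ENNReal

namespace MRAformal

/-- Standard Gaussian measure `N(0, I_L)` on `ℝ^L`. -/
noncomputable def stdGaussian (L : ℕ) : Measure (Fin L → ℝ) :=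
  Measure.pi fun _ => gaussianReal 0 1

/-- Uniform distribution on `{0, …, L-1}`. -/
noncomputable def unifFin (L : ℕ) : Measure (Fin L) :=
  ((L : ℝ≥0∞))⁻¹ • Measure.count

/-- Alignment distortion `ρ(x, x̂) = L⁻¹ min_ℓ ‖x - R_ℓ x̂‖²`,
where `(R_ℓ x̂)_j = x̂_{j+ℓ mod L}`. -/
noncomputable def rho (L : ℕ) (x xh : Fin L → ℝ) : ℝ :=
  (L : ℝ)⁻¹ * ⨅ ℓ : Fin L, ∑ j, (x j - xh (j + ℓ)) ^ 2

/-- Base probability space for the MRA model with `n` samples: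
the signal `X`, the i.i.d. uniform shifts `ℓ_i`, and the i.i.d. Gaussian noises `Z_i`. -/
noncomputable def mraBase (L n : ℕ) :
    Measure ((Fin L → ℝ) × (Fin n → Fin L) × (Fin n → Fin L → ℝ)) :=
  (stdGaussian L).prod ((Measure.pi fun _ => unifFin L).prod (Measure.pi fun _ => stdGaussian L))

/-- The measurements `Y_i = R_{ℓ_i} X + σ Z_i`. -/
def mraY (L n : ℕ) (σ : ℝ) (ω : (Fin L → ℝ) × (Fin n → Fin L) × (Fin n → Fin L → ℝ)) :
    Fin n → Fin L → ℝ :=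
  fun i j => ω.1 (j + ω.2.1 i) + σ * ω.2.2 i j

/-- `MSE*_MRA(L, σ², n)`: the infimum over measurable estimators `X̂(Y_1,…,Y_n)` of `E ρ(X, X̂)`.
Here `σ` is the noise standard deviation. -/
noncomputable def MSEstarMRA (L n : ℕ) (σ : ℝ) : ℝ :=
  sInf { e : ℝ | ∃ f : (Fin n → Fin L → ℝ) → (Fin L → ℝ), Measurable f ∧
    e = ∫ ω, rho L ω.1 (f (mraY L n σ ω)) ∂(mraBase L n) }

/-- `n*_MRA(L, σ², ε) = min {n : MSE*_MRA(L, σ², n) ≤ ε}`. -/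
noncomputable def nstarMRA (L : ℕ) (σ ε : ℝ) : ℕ :=
  sInf { n : ℕ | MSEstarMRA L n σ ≤ ε }

/-- Noise level such that `σ²(α) = L / (α log L)`. -/
noncomputable def sigmaAlpha (L : ℕ) (α : ℝ) : ℝ :=
  Real.sqrt ((L : ℝ) / (α * Real.log L))

/-- `n*_MRA(L, α, ε) := n*_MRA(L, σ²(α), ε)`. -/
noncomputable def nstarMRAa (L : ℕ) (α ε : ℝ) : ℕ :=
  nstarMRA L (sigmaAlpha L α) ε

/-- Mutual information `I(U; V)`: the Kullback–Leibler divergence of the joint law with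
respect to the product of its marginals (natural logarithm), expressed as the integral of
the log of the Radon–Nikodym derivative. -/
noncomputable def mutualInfo {α β : Type*} [MeasurableSpace α] [MeasurableSpace β]
    (μ : Measure (α × β)) : ℝ :=
  ∫ p, Real.log ((μ.rnDeriv ((μ.map Prod.fst).prod (μ.map Prod.snd))) p).toReal ∂μ

/-- Joint law of `(X, (Y_1,…,Y_n))` in the MRA model. -/
noncomputable def mraJoint (L n : ℕ) (σ : ℝ) :
    Measure ((Fin L → ℝ) × (Fin n → Fin L → ℝ)) :=
  (mraBase L n).map fun ω => (ω.1, mraY L n σ ω)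

/-- Joint law of `(X, Y)` for a single MRA measurement `Y = R_ℓ X + σ Z`. -/
noncomputable def mraJoint1 (L : ℕ) (σ : ℝ) : Measure ((Fin L → ℝ) × (Fin L → ℝ)) :=
  ((stdGaussian L).prod ((unifFin L).prod (stdGaussian L))).map
    fun ω => (ω.1, fun j => ω.1 (j + ω.2.1) + σ * ω.2.2 j)

/-!
Given `X = x`, the output `Y` is a uniform mixture of the Gaussians `N(R_ℓ x, σ²I)`, so its density
`f(x, y)` relative to the marginal law `N(0, (1 + σ²)I)` of `Y` is explicit, and `I(X; Y)` is the
expectation of `log f(X, Y)`. Reindexing the mixture gives `f(R_ℓ x, y) = f(x, y)`; since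
`(R_ℓ X, Z)` has the law of `(X, Z)`, the random shift disappears and
`I(X; Y) = E log f(X, X + σZ)`. As `‖R_ℓ x‖ = ‖x‖`, the quadratic part of the exponents leaves the
mixture and contributes second moments; what stays inside is the average of `exp(σ⁻²⟨y, R_ℓ x⟩)`.
Only invariance is used, so the cyclic shifts may be replaced by any group acting on the
coordinates, with an invariant probability law on it.
-/

section WithDensity

variable {α β γ : Type*} [MeasurableSpace α] [MeasurableSpace β] [MeasurableSpace γ]

lemma mutualInfo_eq_integral_log_of_eq_withDensity {μ : Measure (α × β)} [IsFiniteMeasure μ]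
    {f : α × β → ℝ≥0∞} (hf : Measurable f)
    (hμ : μ = ((μ.map Prod.fst).prod (μ.map Prod.snd)).withDensity f) :
    mutualInfo μ = ∫ p, Real.log (f p).toReal ∂μ := by
  set ν := (μ.map Prod.fst).prod (μ.map Prod.snd)
  have hrn : μ.rnDeriv ν =ᵐ[ν] f := by
    rw [hμ]
    exact Measure.rnDeriv_withDensity ν hf
  have hac : μ ≪ ν := hμ ▸ withDensity_absolutelyContinuous ν f
  refine integral_congr_ae ?_
  filter_upwards [hac.ae_le hrn] with p hp
  rw [hp]

variable {μ : Measure α} {ζ : Measure β} {ν : Measure γ} [SFinite ζ] [SFinite ν]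
  {T : α → β → γ} {f : α → γ → ℝ≥0∞}

lemma map_prodMk_eq_withDensity (hT : Measurable (Function.uncurry T))
    (hf : Measurable (Function.uncurry f)) (h : ∀ x, ζ.map (T x) = ν.withDensity (f x)) :
    (μ.prod ζ).map (fun p => (p.1, T p.1 p.2)) = (μ.prod ν).withDensity (Function.uncurry f) := by
  have hT' : Measurable fun p : α × β => (p.1, T p.1 p.2) := measurable_fst.prodMk hT
  refine Measure.ext_of_lintegral _ fun k hk => ?_
  calc ∫⁻ q, k q ∂(μ.prod ζ).map (fun p => (p.1, T p.1 p.2))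
    _ = ∫⁻ x, ∫⁻ z, k (x, T x z) ∂ζ ∂μ := by
      rw [lintegral_map hk hT',
        lintegral_prod (fun p => k (p.1, T p.1 p.2)) (hk.comp hT').aemeasurable]
    _ = ∫⁻ x, ∫⁻ y, f x y * k (x, y) ∂ν ∂μ := by
      refine lintegral_congr fun x => ?_
      have hkx : Measurable fun y => k (x, y) := hk.comp measurable_prodMk_left
      rw [← lintegral_map hkx hT.of_uncurry_left, h x,
        lintegral_withDensity_eq_lintegral_mul _ hf.of_uncurry_left hkx]
      rfl
    _ = ∫⁻ q, k q ∂(μ.prod ν).withDensity (Function.uncurry f) := by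
      rw [lintegral_withDensity_eq_lintegral_mul _ hf hk, lintegral_prod _ (hf.mul hk).aemeasurable]
      rfl

lemma map_uncurry_eq_withDensity_lintegral [SFinite μ] (hT : Measurable (Function.uncurry T))
    (hf : Measurable (Function.uncurry f)) (h : ∀ x, ζ.map (T x) = ν.withDensity (f x)) :
    (μ.prod ζ).map (Function.uncurry T) = ν.withDensity fun y => ∫⁻ x, f x y ∂μ := by
  have hT' : Measurable fun p : α × β => (p.1, T p.1 p.2) := measurable_fst.prodMk hT
  rw [show Function.uncurry T = Prod.snd ∘ fun p => (p.1, T p.1 p.2) from rfl,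
    ← Measure.map_map measurable_snd hT', map_prodMk_eq_withDensity hT hf h]
  ext s hs
  rw [Measure.map_apply measurable_snd hs, withDensity_apply _ (measurable_snd hs),
    withDensity_apply _ hs, ← Set.univ_prod, ← Measure.prod_restrict, Measure.restrict_univ,
    lintegral_prod_symm _ hf.aemeasurable]
  rfl

lemma pi_withDensity {ι : Type*} [Fintype ι] {X : ι → Type*} [∀ i, MeasurableSpace (X i)]
    {μ : ∀ i, Measure (X i)} [∀ i, IsProbabilityMeasure (μ i)] {f : ∀ i, X i → ℝ≥0∞}
    [∀ i, SigmaFinite ((μ i).withDensity (f i))] (hf : ∀ i, Measurable (f i)) :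
    Measure.pi (fun i => (μ i).withDensity (f i)) =
      (Measure.pi μ).withDensity fun x => ∏ i, f i (x i) := by
  refine Measure.pi_eq fun s hs => ?_
  have hsf (i : ι) : Measurable ((s i).indicator (f i)) := (hf i).indicator (hs i)
  have hind (x : ∀ i, X i) : (Set.univ.pi s).indicator (fun x => ∏ i, f i (x i)) x =
      ∏ i, (s i).indicator (f i) (x i) := by
    classical simp [Set.indicator_apply, Finset.prod_ite_zero]
  have hindep : iIndepFun (fun i x => (s i).indicator (f i) (x i)) (Measure.pi μ) :=
    iIndepFun_pi fun i => (hsf i).aemeasurable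
  rw [withDensity_apply _ (.univ_pi hs), ← lintegral_indicator (.univ_pi hs)]
  simp_rw [hind]
  rw [lintegral_prod_eq_prod_lintegral_of_indepFun _ _ hindep
    fun i => (hsf i).comp (measurable_pi_apply i)]
  refine Finset.prod_congr rfl fun i _ => ?_
  rw [(measurePreserving_eval μ i).lintegral_comp (hsf i), lintegral_indicator (hs i),
    withDensity_apply _ (hs i)]

end WithDensity

section IntegralExp

variable {α : Type*} [MeasurableSpace α]

lemma integrable_exp_of_abs_le {μ : Measure α} [IsFiniteMeasure μ] {h : α → ℝ} {B : ℝ}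
    (hm : AEMeasurable h μ) (hB : ∀ x, |h x| ≤ B) : Integrable (fun x => Real.exp (h x)) μ :=
  .of_bound hm.exp.aestronglyMeasurable (Real.exp B) <| ae_of_all _ fun x => by
    simpa using (abs_le.1 (hB x)).2

lemma abs_log_integral_exp_le {μ : Measure α} [IsProbabilityMeasure μ] {h : α → ℝ} {B : ℝ}
    (hm : AEMeasurable h μ) (hB : ∀ x, |h x| ≤ B) :
    |Real.log (∫ x, Real.exp (h x) ∂μ)| ≤ B := by
  have hint := integrable_exp_of_abs_le hm hB
  rw [abs_le, Real.le_log_iff_exp_le (integral_exp_pos hint),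
    Real.log_le_iff_le_exp (integral_exp_pos hint)]
  have hconst (c : ℝ) : ∫ _, Real.exp c ∂μ = Real.exp c := by simp
  constructor
  · rw [← hconst (-B)]
    exact integral_mono (integrable_const _) hint fun x => Real.exp_le_exp.2 (abs_le.1 (hB x)).1
  · rw [← hconst B]
    exact integral_mono hint (integrable_const _) fun x => Real.exp_le_exp.2 (abs_le.1 (hB x)).2

end IntegralExp

section Gaussian

open scoped NNReal

/-- Log-likelihood ratio at `y` of the Gaussian `N(m, v)` against `N(m', w)`. -/
noncomputable def gaussianLLR (m : ℝ) (v : ℝ≥0) (m' : ℝ) (w : ℝ≥0) (y : ℝ) : ℝ :=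
  Real.log (w / v) / 2 - (y - m) ^ 2 / (2 * v) + (y - m') ^ 2 / (2 * w)

@[fun_prop]
lemma measurable_gaussianLLR (v : ℝ≥0) (m' : ℝ) (w : ℝ≥0) :
    Measurable fun p : ℝ × ℝ => gaussianLLR p.1 v m' w p.2 := by
  unfold gaussianLLR
  fun_prop

section LikelihoodRatio

variable {v w : ℝ≥0}

lemma gaussianPDFReal_eq_mul_exp_gaussianLLR (m m' : ℝ) (hv : v ≠ 0) (hw : w ≠ 0) (y : ℝ) :
    gaussianPDFReal m v y = gaussianPDFReal m' w y * Real.exp (gaussianLLR m v m' w y) := by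
  have : (0 : ℝ) < v := by positivity
  have : (0 : ℝ) < w := by positivity
  have hnorm : √(2 * Real.pi * w) = √(2 * Real.pi * v) * √(w / v) := by
    rw [← Real.sqrt_mul (by positivity)]
    congr 1
    field_simp
  have hsqrt : √((w : ℝ) / v) ≠ 0 := by positivity
  have hexp : Real.exp (-(y - m) ^ 2 / (2 * v)) =
      Real.exp (-(y - m') ^ 2 / (2 * w)) *
        Real.exp (-(y - m) ^ 2 / (2 * v) + (y - m') ^ 2 / (2 * w)) := by
    rw [← Real.exp_add]
    ring_nf
  rw [gaussianLLR, sub_add, sub_eq_add_neg, Real.exp_add, Real.exp_half,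
    Real.exp_log (by positivity), gaussianPDFReal, gaussianPDFReal, hnorm, hexp,
    show -((y - m) ^ 2 / (2 * v) - (y - m') ^ 2 / (2 * w)) =
      -(y - m) ^ 2 / (2 * v) + (y - m') ^ 2 / (2 * w) by ring]
  field_simp

lemma gaussianReal_eq_withDensity (m m' : ℝ) (hv : v ≠ 0) (hw : w ≠ 0) :
    gaussianReal m v = (gaussianReal m' w).withDensity
      fun y => ENNReal.ofReal (Real.exp (gaussianLLR m v m' w y)) := by
  rw [gaussianReal_of_var_ne_zero _ hv, gaussianReal_of_var_ne_zero _ hw,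
    ← withDensity_mul _ (by fun_prop) (by fun_prop)]
  congr 1 with y
  rw [Pi.mul_apply, gaussianPDF, gaussianPDF, ← ENNReal.ofReal_mul (gaussianPDFReal_nonneg _ _ _),
    ← gaussianPDFReal_eq_mul_exp_gaussianLLR m m' hv hw]

lemma pi_gaussianReal_eq_withDensity {ι : Type*} [Fintype ι] (m m' : ι → ℝ) (hv : v ≠ 0)
    (hw : w ≠ 0) :
    Measure.pi (fun i => gaussianReal (m i) v) =
      (Measure.pi fun i => gaussianReal (m' i) w).withDensity
        fun y => ENNReal.ofReal (Real.exp (∑ i, gaussianLLR (m i) v (m' i) w (y i))) := by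
  have hcoord (i : ι) := gaussianReal_eq_withDensity (m i) (m' i) hv hw
  have (i : ι) : SigmaFinite ((gaussianReal (m' i) w).withDensity
      fun y => ENNReal.ofReal (Real.exp (gaussianLLR (m i) v (m' i) w y))) := by
    rw [← hcoord i]
    infer_instance
  simp_rw [hcoord]
  rw [pi_withDensity fun i => by fun_prop]
  simp_rw [Real.exp_sum, ENNReal.ofReal_prod_of_nonneg fun _ _ => (Real.exp_pos _).le]

end LikelihoodRatio

/-- The centred Gaussian `N(0, v I)` on `ι → ℝ`. -/
noncomputable def gaussianPi (ι : Type*) [Fintype ι] (v : ℝ≥0) : Measure (ι → ℝ) :=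
  Measure.pi fun _ => gaussianReal 0 v

variable {ι : Type*} [Fintype ι]

instance (v : ℝ≥0) : IsProbabilityMeasure (gaussianPi ι v) := by
  unfold gaussianPi
  infer_instance

lemma gaussianReal_map_add_mul (m σ : ℝ) (v : ℝ≥0) :
    (gaussianReal 0 v).map (fun z => m + σ * z) = gaussianReal m (‖σ‖₊ ^ 2 * v) := by
  rw [show (fun z => m + σ * z) = (m + ·) ∘ (σ * ·) from rfl,
    ← Measure.map_map (by fun_prop) (by fun_prop), gaussianReal_map_const_mul,
    gaussianReal_map_const_add, mul_zero, zero_add]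
  congr 2
  ext
  simp

lemma gaussianPi_map_add_smul (m : ι → ℝ) (σ : ℝ) (v : ℝ≥0) :
    (gaussianPi ι v).map (fun z => m + σ • z) =
      Measure.pi fun i => gaussianReal (m i) (‖σ‖₊ ^ 2 * v) := by
  have (i : ι) : SigmaFinite ((gaussianReal 0 v).map fun z => m i + σ * z) := by
    rw [gaussianReal_map_add_mul]
    infer_instance
  simp_rw [← gaussianReal_map_add_mul]
  exact Measure.pi_map_pi (f := fun i z => m i + σ * z) fun i => by fun_prop

lemma measurePreserving_add_mul_gaussianReal (σ : ℝ) (v w : ℝ≥0) :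
    MeasurePreserving (fun p : ℝ × ℝ => p.1 + σ * p.2)
      ((gaussianReal 0 v).prod (gaussianReal 0 w)) (gaussianReal 0 (v + ‖σ‖₊ ^ 2 * w)) := by
  have hscale : MeasurePreserving (σ * ·) (gaussianReal 0 w) (gaussianReal 0 (‖σ‖₊ ^ 2 * w)) :=
    ⟨by fun_prop, by simpa using gaussianReal_map_add_mul 0 σ w⟩
  have hadd : MeasurePreserving (fun p : ℝ × ℝ => p.1 + p.2)
      ((gaussianReal 0 v).prod (gaussianReal 0 (‖σ‖₊ ^ 2 * w)))
      (gaussianReal 0 (v + ‖σ‖₊ ^ 2 * w)) :=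
    ⟨by fun_prop, by simpa [Measure.conv] using
      gaussianReal_conv_gaussianReal (m₁ := 0) (m₂ := 0) (v₁ := v) (v₂ := ‖σ‖₊ ^ 2 * w)⟩
  exact hadd.comp ((MeasurePreserving.id _).prod hscale)

lemma measurePreserving_add_smul_gaussianPi (σ : ℝ) (v w : ℝ≥0) :
    MeasurePreserving (fun p : (ι → ℝ) × (ι → ℝ) => p.1 + σ • p.2)
      ((gaussianPi ι v).prod (gaussianPi ι w)) (gaussianPi ι (v + ‖σ‖₊ ^ 2 * w)) :=
  (measurePreserving_pi (fun _ : ι => (gaussianReal 0 v).prod (gaussianReal 0 w)) _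
      fun _ => measurePreserving_add_mul_gaussianReal σ v w).comp
    (measurePreserving_arrowProdEquivProdArrow ℝ ℝ ι _ _).symm

lemma measurePreserving_comp_perm_gaussianPi (e : Equiv.Perm ι) (v : ℝ≥0) :
    MeasurePreserving (fun x : ι → ℝ => x ∘ e) (gaussianPi ι v) (gaussianPi ι v) :=
  measurePreserving_arrowCongr' _ _ e.symm (MeasurableEquiv.refl ℝ) fun _ => MeasurePreserving.id _

lemma integrable_sq_gaussianReal (v : ℝ≥0) : Integrable (fun t : ℝ => t ^ 2) (gaussianReal 0 v) :=
  (memLp_id_gaussianReal 2).integrable_sq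

lemma integral_sq_gaussianReal (v : ℝ≥0) : ∫ t, t ^ 2 ∂gaussianReal 0 v = v := by
  simpa [variance_fun_id_gaussianReal] using
    (variance_of_integral_eq_zero (X := fun t : ℝ => t) (μ := gaussianReal 0 v)
      (by fun_prop) (by simp)).symm

lemma integrable_sq_eval_gaussianPi (v : ℝ≥0) (i : ι) :
    Integrable (fun x : ι → ℝ => x i ^ 2) (gaussianPi ι v) :=
  integrable_comp_eval (μ := fun _ : ι => gaussianReal 0 v) (i := i) (integrable_sq_gaussianReal v)

lemma integral_sq_eval_gaussianPi (v : ℝ≥0) (i : ι) : ∫ x, x i ^ 2 ∂gaussianPi ι v = v :=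
  (integral_comp_eval (μ := fun _ : ι => gaussianReal 0 v) (i := i)
    (integrable_sq_gaussianReal v).aestronglyMeasurable).trans (integral_sq_gaussianReal v)

lemma integrable_dotProduct_self_gaussianPi (v : ℝ≥0) :
    Integrable (fun x : ι → ℝ => x ⬝ᵥ x) (gaussianPi ι v) := by
  simp_rw [dotProduct, ← sq]
  exact integrable_finsetSum _ fun i _ => integrable_sq_eval_gaussianPi v i

lemma integral_dotProduct_self_gaussianPi (v : ℝ≥0) :
    ∫ x, x ⬝ᵥ x ∂gaussianPi ι v = Fintype.card ι * v := by
  simp_rw [dotProduct, ← sq]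
  rw [integral_finsetSum _ fun i _ => integrable_sq_eval_gaussianPi v i]
  simp [integral_sq_eval_gaussianPi]

section HasLaw

variable {Ω : Type*} [MeasurableSpace Ω] {P : Measure Ω} {X : Ω → ι → ℝ} {v : ℝ≥0}

lemma integrable_dotProduct_self_of_hasLaw (hX : HasLaw X (gaussianPi ι v) P) :
    Integrable (fun ω => X ω ⬝ᵥ X ω) P :=
  (hX.map_eq.symm ▸ integrable_dotProduct_self_gaussianPi v).comp_aemeasurable hX.aemeasurable

lemma integral_dotProduct_self_of_hasLaw (hX : HasLaw X (gaussianPi ι v) P) :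
    ∫ ω, X ω ⬝ᵥ X ω ∂P = Fintype.card ι * v :=
  (hX.integral_comp (integrable_dotProduct_self_gaussianPi v).aestronglyMeasurable).trans
    (integral_dotProduct_self_gaussianPi v)

end HasLaw

end Gaussian

section Channel

variable {ι : Type*} [Fintype ι] {σ : ℝ}

lemma abs_dotProduct_le (a b : ι → ℝ) : |a ⬝ᵥ b| ≤ (a ⬝ᵥ a + b ⬝ᵥ b) / 2 := by
  have hadd : (a + b) ⬝ᵥ (a + b) = a ⬝ᵥ a + 2 * (a ⬝ᵥ b) + b ⬝ᵥ b := by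
    rw [add_dotProduct, dotProduct_add, dotProduct_add, dotProduct_comm b a]
    ring
  have hsub : (a - b) ⬝ᵥ (a - b) = a ⬝ᵥ a - 2 * (a ⬝ᵥ b) + b ⬝ᵥ b := by
    rw [sub_dotProduct, dotProduct_sub, dotProduct_sub, dotProduct_comm b a]
    ring
  have hadd_nonneg : 0 ≤ (a + b) ⬝ᵥ (a + b) := Finset.sum_nonneg fun i _ => mul_self_nonneg _
  have hsub_nonneg : 0 ≤ (a - b) ⬝ᵥ (a - b) := Finset.sum_nonneg fun i _ => mul_self_nonneg _
  rw [abs_le]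
  constructor <;> linarith

/-- Log-likelihood ratio at `y` of `N(x, σ²I)`, the law of the output `x + σZ` of the Gaussian
channel, against `N(0, (1 + σ²)I)`, the law of the output when the input is `N(0, I)`. -/
noncomputable def channelLLR (σ : ℝ) (x y : ι → ℝ) : ℝ :=
  ∑ i, gaussianLLR (x i) (‖σ‖₊ ^ 2) 0 (1 + ‖σ‖₊ ^ 2) (y i)

@[fun_prop]
lemma measurable_channelLLR :
    Measurable fun p : (ι → ℝ) × (ι → ℝ) => channelLLR σ p.1 p.2 := by
  unfold channelLLR gaussianLLR
  fun_prop

lemma channelLLR_eq (hσ : σ ≠ 0) (x y : ι → ℝ) :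
    channelLLR σ x y = Fintype.card ι / 2 * Real.log (1 + (σ ^ 2)⁻¹) - (x ⬝ᵥ x) * (2 * σ ^ 2)⁻¹ +
      (y ⬝ᵥ y) * ((2 * (1 + σ ^ 2))⁻¹ - (2 * σ ^ 2)⁻¹) + (σ ^ 2)⁻¹ * (y ⬝ᵥ x) := by
  have hratio : (1 + σ ^ 2) / σ ^ 2 = 1 + (σ ^ 2)⁻¹ := by
    field_simp
    ring
  have hcard : (Fintype.card ι : ℝ) / 2 * Real.log (1 + (σ ^ 2)⁻¹) =
      ∑ _i : ι, Real.log (1 + (σ ^ 2)⁻¹) / 2 := by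
    simp
    ring
  simp only [channelLLR, gaussianLLR, dotProduct, NNReal.coe_add, NNReal.coe_one, NNReal.coe_pow,
    coe_nnnorm, Real.norm_eq_abs, sq_abs, hratio]
  rw [hcard, Finset.sum_mul, Finset.sum_mul, Finset.mul_sum, ← Finset.sum_sub_distrib,
    ← Finset.sum_add_distrib, ← Finset.sum_add_distrib]
  refine Finset.sum_congr rfl fun i _ => ?_
  field_simp
  ring

lemma gaussianPi_map_add_smul_eq_withDensity (hσ : σ ≠ 0) (x : ι → ℝ) :
    (gaussianPi ι 1).map (fun z => x + σ • z) = (gaussianPi ι (1 + ‖σ‖₊ ^ 2)).withDensity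
      fun y => ENNReal.ofReal (Real.exp (channelLLR σ x y)) := by
  rw [gaussianPi_map_add_smul, mul_one]
  exact pi_gaussianReal_eq_withDensity x 0 (by simpa using hσ) (by positivity)

end Channel

section Shift

open scoped NNReal

variable {ι G : Type*}

/-- The coordinate translation `(shift g x) i = x (g +ᵥ i)`, generalising the cyclic shift `R_ℓ`
to an arbitrary action on the index set. -/
def shift [VAdd G ι] (g : G) (x : ι → ℝ) : ι → ℝ := fun i => x (g +ᵥ i)

lemma shift_shift [AddMonoid G] [AddAction G ι] (g h : G) (x : ι → ℝ) :
    shift g (shift h x) = shift (h + g) x := by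
  ext i
  simp only [shift, add_vadd]

section Measurable

variable [VAdd G ι] [Countable ι] [MeasurableSpace ι] [DiscreteMeasurableSpace ι]
  [MeasurableSpace G] [MeasurableVAdd G ι]

@[fun_prop]
lemma measurable_shift : Measurable fun p : G × (ι → ℝ) => shift p.1 p.2 := by
  have heval : Measurable fun q : ι × (ι → ℝ) => q.2 q.1 :=
    measurable_from_prod_countable_right fun i => measurable_pi_apply i
  exact measurable_pi_lambda _ fun i =>
    heval.comp ((measurable_fst.vadd_const i).prodMk measurable_snd)

lemma measurable_prodMk_shift_add_smul (σ : ℝ) :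
    Measurable fun ω : (ι → ℝ) × G × (ι → ℝ) => (ω.1, shift ω.2.1 ω.1 + σ • ω.2.2) := by
  fun_prop

end Measurable

variable [Fintype ι] [AddGroup G] [AddAction G ι]

lemma shift_dotProduct_shift (g : G) (x y : ι → ℝ) : shift g x ⬝ᵥ shift g y = x ⬝ᵥ y :=
  comp_equiv_dotProduct_comp_equiv x y (AddAction.toPerm g)

lemma abs_mul_dotProduct_shift_le {c : ℝ} (hc : 0 ≤ c) (g : G) (x y : ι → ℝ) :
    |c * (y ⬝ᵥ shift g x)| ≤ c * ((y ⬝ᵥ y + x ⬝ᵥ x) / 2) := by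
  rw [abs_mul, abs_of_nonneg hc, ← shift_dotProduct_shift g x x]
  gcongr
  exact abs_dotProduct_le y (shift g x)

lemma measurePreserving_shift (g : G) (v : ℝ≥0) :
    MeasurePreserving (shift g) (gaussianPi ι v) (gaussianPi ι v) :=
  measurePreserving_comp_perm_gaussianPi (AddAction.toPerm g) v

end Shift

section Orbit

variable {ι G : Type*} [Fintype ι] [MeasurableSpace G]

variable (ι) in
/-- Joint law of `(X, g, Z)`: independent `X, Z ∼ N(0, I)` and `g ∼ U`. -/
noncomputable def sourceLaw (U : Measure G) : Measure ((ι → ℝ) × G × (ι → ℝ)) :=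
  (gaussianPi ι 1).prod (U.prod (gaussianPi ι 1))

variable [VAdd G ι]

variable (ι) in
/-- Joint law of `(X, Y)` for the noisy measurement `Y = shift g X + σ Z`, where `X, Z ∼ N(0, I)`
and `g ∼ U` are independent. -/
noncomputable def orbitJoint (U : Measure G) (σ : ℝ) : Measure ((ι → ℝ) × (ι → ℝ)) :=
  (sourceLaw ι U).map fun ω => (ω.1, shift ω.2.1 ω.1 + σ • ω.2.2)

/-- Density at `y` of the law of `shift g x + σ Z`, with `g ∼ U`, relative to `N(0, (1 + σ²)I)`. -/
noncomputable def mixtureDensity (U : Measure G) (σ : ℝ) (x y : ι → ℝ) : ℝ≥0∞ :=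
  ∫⁻ g, ENNReal.ofReal (Real.exp (channelLLR σ (shift g x) y)) ∂U

/-- Logarithm of the partition function `E_g exp(σ⁻²⟨y, shift g x⟩)`, where `g ∼ U`. -/
noncomputable def logPartition (U : Measure G) (σ : ℝ) (x y : ι → ℝ) : ℝ :=
  Real.log (∫ g, Real.exp ((σ ^ 2)⁻¹ * (y ⬝ᵥ shift g x)) ∂U)

variable {U : Measure G} {σ : ℝ} [MeasurableSpace ι] [DiscreteMeasurableSpace ι]
  [MeasurableVAdd G ι]

@[fun_prop]
lemma measurable_mixtureDensity [SFinite U] :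
    Measurable fun p : (ι → ℝ) × (ι → ℝ) => mixtureDensity U σ p.1 p.2 :=
  Measurable.lintegral_prod_right' (ν := U)
    (f := fun q : ((ι → ℝ) × (ι → ℝ)) × G =>
      ENNReal.ofReal (Real.exp (channelLLR σ (shift q.2 q.1.1) q.1.2))) (by fun_prop)

@[fun_prop]
lemma measurable_logPartition [SFinite U] :
    Measurable fun p : (ι → ℝ) × (ι → ℝ) => logPartition U σ p.1 p.2 :=
  (StronglyMeasurable.integral_prod_right' (ν := U)
    (f := fun q : ((ι → ℝ) × (ι → ℝ)) × G => Real.exp ((σ ^ 2)⁻¹ * (q.1.2 ⬝ᵥ shift q.2 q.1.1)))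
    (Measurable.stronglyMeasurable (by fun_prop))).measurable.log

lemma toReal_mixtureDensity (x y : ι → ℝ) :
    (mixtureDensity U σ x y).toReal = ∫ g, Real.exp (channelLLR σ (shift g x) y) ∂U :=
  (integral_eq_lintegral_of_nonneg_ae (ae_of_all _ fun g => (Real.exp_pos _).le)
    (Measurable.aestronglyMeasurable (by fun_prop))).symm

lemma orbitJoint_eq_withDensity [SFinite U] (hσ : σ ≠ 0) :
    orbitJoint ι U σ = ((gaussianPi ι 1).prod (gaussianPi ι (1 + ‖σ‖₊ ^ 2))).withDensity
      (Function.uncurry (mixtureDensity U σ)) :=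
  map_prodMk_eq_withDensity (T := fun x (q : G × (ι → ℝ)) => shift q.1 x + σ • q.2)
    (by fun_prop) measurable_mixtureDensity fun x =>
      map_uncurry_eq_withDensity_lintegral (T := fun g z => shift g x + σ • z)
        (f := fun g y => ENNReal.ofReal (Real.exp (channelLLR σ (shift g x) y)))
        (by fun_prop) (by fun_prop) fun g => gaussianPi_map_add_smul_eq_withDensity hσ (shift g x)

lemma map_fst_orbitJoint [IsProbabilityMeasure U] :
    (orbitJoint ι U σ).map Prod.fst = gaussianPi ι 1 := by
  rw [orbitJoint, Measure.map_map measurable_fst (measurable_prodMk_shift_add_smul σ)]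
  exact measurePreserving_fst.map_eq

end Orbit

section InvariantOrbit

variable {ι G : Type*} [Fintype ι] [AddGroup G] [MeasurableSpace G] [AddAction G ι] {U : Measure G}
  {σ : ℝ}

lemma mixtureDensity_shift [MeasurableAdd G] [U.IsAddLeftInvariant] (h : G) (x y : ι → ℝ) :
    mixtureDensity U σ (shift h x) y = mixtureDensity U σ x y := by
  simp only [mixtureDensity, shift_shift]
  exact lintegral_add_left_eq_self
    (fun g => ENNReal.ofReal (Real.exp (channelLLR σ (shift g x) y))) h

variable [MeasurableSpace ι] [DiscreteMeasurableSpace ι] [MeasurableVAdd G ι]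
  [IsProbabilityMeasure U]

lemma measurePreserving_shift_sourceLaw :
    MeasurePreserving (fun ω : (ι → ℝ) × G × (ι → ℝ) => (shift ω.2.1 ω.1, ω.2.2))
      (sourceLaw ι U) ((gaussianPi ι 1).prod (gaussianPi ι 1)) := by
  have hskew : MeasurePreserving (fun q : (G × (ι → ℝ)) × (ι → ℝ) => (q.1.2, shift q.1.1 q.2))
      ((U.prod (gaussianPi ι 1)).prod (gaussianPi ι 1))
      ((gaussianPi ι 1).prod (gaussianPi ι 1)) :=
    measurePreserving_snd.skew_product (g := fun q x => shift q.1 x) (by fun_prop)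
      (ae_of_all _ fun q => (measurePreserving_shift q.1 1).map_eq)
  exact Measure.measurePreserving_swap.comp (hskew.comp Measure.measurePreserving_swap)

lemma map_snd_orbitJoint : (orbitJoint ι U σ).map Prod.snd = gaussianPi ι (1 + ‖σ‖₊ ^ 2) := by
  rw [orbitJoint, Measure.map_map measurable_snd (measurable_prodMk_shift_add_smul σ)]
  have hY := (measurePreserving_add_smul_gaussianPi σ 1 1).comp
    (measurePreserving_shift_sourceLaw (ι := ι) (U := U))
  exact hY.map_eq.trans (by rw [mul_one])

lemma mutualInfo_orbitJoint_eq_integral_log_mixtureDensity [MeasurableAdd G]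
    [U.IsAddLeftInvariant] (hσ : σ ≠ 0) :
    mutualInfo (orbitJoint ι U σ) =
      ∫ p : (ι → ℝ) × (ι → ℝ), Real.log (mixtureDensity U σ p.1 (p.1 + σ • p.2)).toReal
        ∂(gaussianPi ι 1).prod (gaussianPi ι 1) := by
  have : IsFiniteMeasure (orbitJoint ι U σ) := by
    unfold orbitJoint sourceLaw
    infer_instance
  have hdensity := orbitJoint_eq_withDensity (ι := ι) (U := U) hσ
  rw [mutualInfo_eq_integral_log_of_eq_withDensity (f := Function.uncurry (mixtureDensity U σ))
    measurable_mixtureDensity (by rwa [map_fst_orbitJoint, map_snd_orbitJoint])]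
  calc ∫ p, Real.log (mixtureDensity U σ p.1 p.2).toReal ∂orbitJoint ι U σ
    _ = ∫ ω, Real.log (mixtureDensity U σ ω.1 (shift ω.2.1 ω.1 + σ • ω.2.2)).toReal
          ∂sourceLaw ι U :=
      integral_map (measurable_prodMk_shift_add_smul σ).aemeasurable
        (Measurable.aestronglyMeasurable (by fun_prop))
    _ = ∫ ω, Real.log (mixtureDensity U σ (shift ω.2.1 ω.1)
          (shift ω.2.1 ω.1 + σ • ω.2.2)).toReal ∂sourceLaw ι U := by
      simp only [mixtureDensity_shift]
    _ = _ :=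
      measurePreserving_shift_sourceLaw.hasLaw.integral_comp
        (f := fun p => Real.log (mixtureDensity U σ p.1 (p.1 + σ • p.2)).toReal)
        (Measurable.aestronglyMeasurable (by fun_prop))

lemma abs_logPartition_le (x y : ι → ℝ) :
    |logPartition U σ x y| ≤ (σ ^ 2)⁻¹ * ((y ⬝ᵥ y + x ⬝ᵥ x) / 2) :=
  abs_log_integral_exp_le (Measurable.aemeasurable (by fun_prop))
    fun g => abs_mul_dotProduct_shift_le (by positivity) g x y

lemma log_toReal_mixtureDensity (hσ : σ ≠ 0) (x y : ι → ℝ) :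
    Real.log (mixtureDensity U σ x y).toReal =
      Fintype.card ι / 2 * Real.log (1 + (σ ^ 2)⁻¹) - (x ⬝ᵥ x) * (2 * σ ^ 2)⁻¹ +
        (y ⬝ᵥ y) * ((2 * (1 + σ ^ 2))⁻¹ - (2 * σ ^ 2)⁻¹) + logPartition U σ x y := by
  have hint : Integrable (fun g => Real.exp ((σ ^ 2)⁻¹ * (y ⬝ᵥ shift g x))) U :=
    integrable_exp_of_abs_le (Measurable.aemeasurable (by fun_prop))
      fun g => abs_mul_dotProduct_shift_le (by positivity) g x y
  simp_rw [toReal_mixtureDensity, channelLLR_eq hσ, shift_dotProduct_shift, Real.exp_add]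
  rw [integral_const_mul, ← Real.exp_add,
    Real.log_mul (Real.exp_pos _).ne' (integral_exp_pos hint).ne', Real.log_exp, logPartition]

lemma integrable_logPartition :
    Integrable (fun p : (ι → ℝ) × (ι → ℝ) => logPartition U σ p.1 (p.1 + σ • p.2))
      ((gaussianPi ι 1).prod (gaussianPi ι 1)) := by
  have hX := integrable_dotProduct_self_of_hasLaw
    (measurePreserving_fst (μ := gaussianPi ι 1) (ν := gaussianPi ι 1)).hasLaw
  have hY := integrable_dotProduct_self_of_hasLaw
    (measurePreserving_add_smul_gaussianPi (ι := ι) σ 1 1).hasLaw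
  exact (((hY.add hX).div_const 2).const_mul (σ ^ 2)⁻¹).mono'
    (Measurable.aestronglyMeasurable (by fun_prop)) (ae_of_all _ fun p => abs_logPartition_le _ _)

lemma integral_log_toReal_mixtureDensity (hσ : σ ≠ 0) :
    ∫ p : (ι → ℝ) × (ι → ℝ), Real.log (mixtureDensity U σ p.1 (p.1 + σ • p.2)).toReal
        ∂(gaussianPi ι 1).prod (gaussianPi ι 1) =
      Fintype.card ι / 2 * Real.log (1 + (σ ^ 2)⁻¹) - Fintype.card ι / σ ^ 2 +
        ∫ p : (ι → ℝ) × (ι → ℝ), logPartition U σ p.1 (p.1 + σ • p.2)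
          ∂(gaussianPi ι 1).prod (gaussianPi ι 1) := by
  have hX := (measurePreserving_fst (μ := gaussianPi ι 1) (ν := gaussianPi ι 1)).hasLaw
  have hY := (measurePreserving_add_smul_gaussianPi (ι := ι) σ 1 1).hasLaw
  have hXint := (integrable_dotProduct_self_of_hasLaw hX).mul_const (2 * σ ^ 2)⁻¹
  have hYint := (integrable_dotProduct_self_of_hasLaw hY).mul_const
    ((2 * (1 + σ ^ 2))⁻¹ - (2 * σ ^ 2)⁻¹)
  have hconstX : Integrable (fun p : (ι → ℝ) × (ι → ℝ) => Fintype.card ι / 2 *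
      Real.log (1 + (σ ^ 2)⁻¹) - (p.1 ⬝ᵥ p.1) * (2 * σ ^ 2)⁻¹)
      ((gaussianPi ι 1).prod (gaussianPi ι 1)) := (integrable_const _).sub hXint
  simp_rw [log_toReal_mixtureDensity hσ]
  rw [integral_add (by exact hconstX.add hYint) integrable_logPartition,
    integral_add hconstX hYint, integral_sub (integrable_const _) hXint, integral_const,
    integral_mul_const, integral_mul_const, integral_dotProduct_self_of_hasLaw hX,
    integral_dotProduct_self_of_hasLaw hY]
  simp only [probReal_univ, one_smul, NNReal.coe_add, NNReal.coe_one, NNReal.coe_pow, coe_nnnorm,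
    Real.norm_eq_abs, sq_abs, mul_one]
  congr 1
  field_simp
  ring

theorem single_sample_mutual_info_formula_general [MeasurableAdd G] [U.IsAddLeftInvariant]
    (hσ : σ ≠ 0) :
    mutualInfo (orbitJoint ι U σ) =
      Fintype.card ι / 2 * Real.log (1 + (σ ^ 2)⁻¹) - Fintype.card ι / σ ^ 2 +
        ∫ p : (ι → ℝ) × (ι → ℝ), logPartition U σ p.1 (p.1 + σ • p.2)
          ∂(gaussianPi ι 1).prod (gaussianPi ι 1) := by
  rw [mutualInfo_orbitJoint_eq_integral_log_mixtureDensity hσ,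
    integral_log_toReal_mixtureDensity hσ]

end InvariantOrbit

section Cyclic

variable {L : ℕ}

lemma stdGaussian_eq_gaussianPi : stdGaussian L = gaussianPi (Fin L) 1 := rfl

lemma integral_unifFin (f : Fin L → ℝ) : ∫ ℓ, f ℓ ∂unifFin L = (L : ℝ)⁻¹ * ∑ ℓ, f ℓ := by
  simp [unifFin, integral_smul_measure, integral_count]

lemma mraJoint1_eq_orbitJoint (σ : ℝ) : mraJoint1 L σ = orbitJoint (Fin L) (unifFin L) σ := by
  simp only [mraJoint1, add_comm _ (Prod.fst _)]
  rfl

lemma logPartition_unifFin (σ : ℝ) (x y : Fin L → ℝ) :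
    logPartition (unifFin L) σ x y =
      Real.log ((L : ℝ)⁻¹ * ∑ ℓ, Real.exp ((σ ^ 2)⁻¹ * ∑ j, y j * x (j + ℓ))) := by
  simp only [logPartition, integral_unifFin, dotProduct, shift, vadd_eq_add, add_comm]

variable [NeZero L]

instance : IsProbabilityMeasure (unifFin L) := by
  constructor
  simp [unifFin, ENNReal.inv_mul_cancel, NeZero.ne L]

instance : (unifFin L).IsAddLeftInvariant := by
  unfold unifFin
  infer_instance

end Cyclic

/-- exact single-sample mutual information formula. With `Y = R_ℓ X + σ Z`,
`I(X;Y) = (L/2)·log(1 + σ⁻²) − L·σ⁻² + E_{X,Z}[log((1/L)·∑_{ℓ'} exp(σ⁻²⟨X+σZ, R_{ℓ'}X⟩))]`. -/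
theorem single_sample_mutual_info_formula (L : ℕ) (hL : 1 ≤ L) (σ : ℝ) (hσ : 0 < σ) :
    mutualInfo (mraJoint1 L σ) =
      (L : ℝ) / 2 * Real.log (1 + (σ ^ 2)⁻¹) - (L : ℝ) / σ ^ 2 +
        ∫ p : (Fin L → ℝ) × (Fin L → ℝ),
          Real.log ((L : ℝ)⁻¹ * ∑ ℓ' : Fin L,
            Real.exp ((σ ^ 2)⁻¹ * ∑ j, (p.1 j + σ * p.2 j) * p.1 (j + ℓ')))
          ∂((stdGaussian L).prod (stdGaussian L)) := by
  have : NeZero L := ⟨by omega⟩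
  simpa only [mraJoint1_eq_orbitJoint, stdGaussian_eq_gaussianPi, Fintype.card_fin,
    logPartition_unifFin, Pi.add_apply, Pi.smul_apply, smul_eq_mul] using
    single_sample_mutual_info_formula_general (ι := Fin L) (U := unifFin L) hσ.ne'

end MRAformal
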